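/- Let P be a finite set of jobs containing N_0 ≥ 1 jobs of color 0 and N_1 ≥ 1 jobs of color 1. Then for every integer k with 1 ≤ k ≤ min{N_0, N_1}, there exists a schedule S of P (a list containing each job of P exactly once) whose total number of color changes satisfies C(S) = k. -/

import Mathlib

/-- A job is a pair `(t, c)` of a real process temperature `t` and a color `c ∈ {0,1}`. -/
abbrev Job := ℝ × Fin 2

/-- Total number of color changes `C(S) = Σ_{i=1}^{N-1} |c(p_{i+1}) - c(p_i)|`. -/
def colorChanges : List Job → ℕ
  | p :: q :: rest => Nat.dist (p.2 : ℕ) (q.2 : ℕ) + colorChanges (q :: rest)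
  | _ => 0

theorem dist_ne_aux : ∀ c d : Fin 2, c ≠ d → Nat.dist (c : ℕ) (d : ℕ) = 1 := by decide

theorem changes_mono (c : Fin 2) : ∀ (B : List Job), (∀ x ∈ B, x.2 = c) → colorChanges B = 0
  | [], _ => rfl
  | [_], _ => rfl
  | p :: q :: r, h => by
    have hp : p.2 = c := h p (by simp)
    have hq : q.2 = c := h q (by simp)
    have ih := changes_mono c (q :: r) (fun x hx => h x (List.mem_cons_of_mem _ hx))
    simp only [colorChanges, ih, hp, hq, Nat.dist_self]

theorem changes_two (c d : Fin 2) (hcd : c ≠ d) (b : Job) (B : List Job)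
    (hB : ∀ x ∈ b :: B, x.2 = d) : ∀ (A : List Job) (a : Job), (∀ x ∈ a :: A, x.2 = c) →
    colorChanges (a :: (A ++ b :: B)) = 1
  | [], a, h => by
    have ha : a.2 = c := h a (by simp)
    have hb : b.2 = d := hB b (by simp)
    simp only [List.nil_append, colorChanges, changes_mono d _ hB, ha, hb, dist_ne_aux c d hcd]
  | q :: r, a, h => by
    have ha : a.2 = c := h a (by simp)
    have hq : q.2 = c := h q (by simp)
    have ih := changes_two c d hcd b B hB r q (fun x hx => h x (List.mem_cons_of_mem _ hx))
    simp only [List.cons_append, colorChanges, ih, ha, hq, Nat.dist_self]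

theorem exists_alt (k : ℕ) : ∀ (c d : Fin 2), c ≠ d → ∀ (a : Job) (A B : List Job),
    (∀ x ∈ a :: A, x.2 = c) → (∀ x ∈ B, x.2 = d) → k + 1 ≤ B.length → k ≤ A.length →
    ∃ S : List Job, S.Perm (A ++ B) ∧ colorChanges (a :: S) = k + 1 := by
  induction k with
  | zero =>
    intro c d hcd a A B hA hB hlB _
    cases B with
    | nil => simp at hlB
    | cons b B => exact ⟨A ++ b :: B, List.Perm.refl _, changes_two c d hcd b B hB A a hA⟩
  | succ k ih =>
    intro c d hcd a A B hA hB hlB hlA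
    cases B with
    | nil => simp at hlB
    | cons b B =>
      obtain ⟨S, hS, hc⟩ := ih d c hcd.symm b B A hB
        (fun x hx => hA x (List.mem_cons_of_mem _ hx)) hlA (by simp at hlB; omega)
      refine ⟨b :: S, ?_, ?_⟩
      · exact ((hS.trans List.perm_append_comm).cons b).trans List.perm_middle.symm
      · have ha : a.2 = c := hA a (by simp)
        have hb : b.2 = d := hB b (by simp)
        simp only [colorChanges, hc, ha, hb, dist_ne_aux c d hcd]
        omega

/-- For a finite job set with `N₀ ≥ 1` jobs of color `0` and `N₁ ≥ 1` jobs of color `1`,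
and any `k` with `1 ≤ k ≤ min N₀ N₁`, there is a schedule of the job set with exactly
`k` color changes. -/
theorem exists_schedule_with_k_changes (P : Finset Job) (N0 N1 : ℕ)
    (hN0 : N0 = (P.filter (fun p => p.2 = 0)).card)
    (hN1 : N1 = (P.filter (fun p => p.2 = 1)).card)
    (h0 : 1 ≤ N0) (h1 : 1 ≤ N1)
    (k : ℕ) (hk1 : 1 ≤ k) (hk2 : k ≤ min N0 N1) :
    ∃ S : List Job, (S : Multiset Job) = P.val ∧ colorChanges S = k := by
  obtain ⟨k, rfl⟩ : ∃ j, k = j + 1 := ⟨k - 1, by omega⟩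
  obtain ⟨hkA, hkB⟩ := le_min_iff.mp hk2
  have hA : ∀ x ∈ (P.filter (fun p => p.2 = 0)).toList, x.2 = 0 := by
    intro x hx
    exact (Finset.mem_filter.mp (Finset.mem_toList.mp hx)).2
  have hB : ∀ x ∈ (P.filter (fun p => p.2 = 1)).toList, x.2 = 1 := by
    intro x hx
    exact (Finset.mem_filter.mp (Finset.mem_toList.mp hx)).2
  have hsum : (((P.filter (fun p => p.2 = 0)).toList ++
      (P.filter (fun p => p.2 = 1)).toList : List Job) : Multiset Job) = P.val := by
    rw [← Multiset.coe_add, Finset.coe_toList, Finset.coe_toList, Finset.filter_val,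
      Finset.filter_val]
    have h : ∀ x : Job, x.2 = 1 ↔ ¬ x.2 = 0 := by
      intro x
      generalize x.2 = c
      revert c
      decide
    rw [Multiset.filter_congr (p := fun p : Job => p.2 = 1) (q := fun p => ¬ p.2 = 0)
      (fun x _ => h x)]
    exact Multiset.filter_add_not _ _
  rw [← Finset.length_toList] at hN0 hN1
  generalize (P.filter (fun p => p.2 = 0)).toList = A at *
  generalize (P.filter (fun p => p.2 = 1)).toList = B at *
  cases A with
  | nil => simp at hN0; omega
  | cons a A =>
    obtain ⟨S, hS, hc⟩ := exists_alt k 0 1 (by decide) a A B hA hB (by omega)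
      (by simp at hN0; omega)
    exact ⟨a :: S, by rw [← hsum]; exact Multiset.coe_eq_coe.mpr (hS.cons a), hc⟩
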